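/- Let (X, d) be a metric space equipped with its Borel σ-algebra, let μ_b (the generalized source / barycenter distribution) and μ_t (the target distribution) be Borel probability measures on X, and let f : X → {0, 1} be a measurable labeling function. For a measurable ψ : X → [0, 1] define the expected risk ε_μ(ψ) = ∫ |f(x) − ψ(x)| dμ(x). Let φ^S : X → [0, 1] be M-Lipschitz (M ≥ 0). Then for every M-Lipschitz function φ : X → [0, 1] and every coupling π of μ_b and μ_t with (a,b) ↦ d(a,b) integrable with respect to π, ε_{μ_t}(φ^S) ≤ ε_{μ_b}(φ^S) + 2M ∫ d(a, b) dπ(a, b) + ε_{μ_t}(φ) + ε_{μ_b}(φ). In particular, taking the infimum over couplings π and over M-Lipschitz φ yields ε_{μ_t}(φ^S) ≤ ε_{μ_b}(φ^S) + 2M · W₁(μ_b, μ_t) + λ with λ = min_{φ M-Lipschitz, φ : X → [0,1]} ( ε_{μ_t}(φ) + ε_{μ_b}(φ) ). -/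

import Mathlib

open MeasureTheory

/-!
For fixed `μ`, the risk `ε_μ(ψ) = ∫ |f - ψ| dμ` is the `L¹(μ)`-distance between `f` and `ψ`, so it
obeys the triangle inequality. Going from `f` to `φS` through `φ` under `μt` leaves the disagreement
`∫ |φ - φS| dμt`. Its integrand is `2M`-Lipschitz, so a coupling `π` moves it from `μt` to `μb` at
cost `2M ∫ d dπ`, where a second triangle inequality, through `f`, bounds it by
`ε_μb(φ) + ε_μb(φS)`.
-/

theorem le_mul_csInf_add_csInf {S R : Set ℝ} {a k : ℝ} (hS : S.Nonempty) (hR : R.Nonempty)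
    (hk : 0 ≤ k) (h : ∀ c ∈ S, ∀ r ∈ R, a ≤ k * c + r) : a ≤ k * sInf S + sInf R := by
  have sub_le_mul : ∀ c ∈ S, a - sInf R ≤ k * c := fun c hc ↦ by
    have : a - k * c ≤ sInf R := le_csInf hR fun r hr ↦ by linarith [h c hc r hr]
    linarith
  have sub_le_mul_sInf : a - sInf R ≤ k * sInf S := by
    rw [← smul_eq_mul, ← Real.sInf_smul_of_nonneg hk]
    exact le_csInf hS.smul_set (Set.forall_mem_image.2 sub_le_mul)
  linarith

section Risk

variable {X : Type*} [MeasurableSpace X] {μ : Measure X} {f φ ψ : X → ℝ}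

/-- The expected risk `ε_μ(ψ) = ∫ |f - ψ| dμ` of the predictor `ψ` for the labels `f`. The labels
may be any real function, so that `expectedRisk φ μ ψ` is also the disagreement of two predictors.
The value is `0` when `|f - ψ|` is not integrable. -/
noncomputable def expectedRisk (f : X → ℝ) (μ : Measure X) (ψ : X → ℝ) : ℝ :=
  ∫ x, |f x - ψ x| ∂μ

theorem expectedRisk_comm (f : X → ℝ) (μ : Measure X) (ψ : X → ℝ) :
    expectedRisk f μ ψ = expectedRisk ψ μ f := by
  simp only [expectedRisk, abs_sub_comm]

theorem expectedRisk_triangle (hf : Integrable f μ) (hφ : Integrable φ μ) (hψ : Integrable ψ μ) :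
    expectedRisk f μ ψ ≤ expectedRisk f μ φ + expectedRisk φ μ ψ := by
  calc ∫ x, |f x - ψ x| ∂μ ≤ ∫ x, (|f x - φ x| + |φ x - ψ x|) ∂μ :=
        integral_mono (hf.sub hψ).abs ((hf.sub hφ).abs.add (hφ.sub hψ).abs)
          fun x ↦ abs_sub_le (f x) (φ x) (ψ x)
    _ = ∫ x, |f x - φ x| ∂μ + ∫ x, |φ x - ψ x| ∂μ :=
        integral_add (hf.sub hφ).abs (hφ.sub hψ).abs

theorem integrable_of_forall_eq_zero_or_one [IsFiniteMeasure μ] (hf : AEMeasurable f μ)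
    (hf01 : ∀ x, f x = 0 ∨ f x = 1) : Integrable f μ :=
  .of_mem_Icc 0 1 hf (ae_of_all _ fun x ↦ by rcases hf01 x with h | h <;> simp [h])

end Risk

section Transport

/-- The easy half of Kantorovich duality. -/
theorem integral_snd_le_integral_fst_add_integral {X Y : Type*} [MeasurableSpace X]
    [MeasurableSpace Y] {π : Measure (X × Y)} {g : X → ℝ} {h : Y → ℝ} {c : X × Y → ℝ}
    (hg : Integrable g π.fst) (hh : Integrable h π.snd) (hc : Integrable c π)
    (hle : ∀ᵐ z ∂π, h z.2 ≤ g z.1 + c z) :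
    ∫ y, h y ∂π.snd ≤ ∫ x, g x ∂π.fst + ∫ z, c z ∂π := by
  have hg' : Integrable (fun z ↦ g z.1) π := hg.comp_measurable measurable_fst
  have hh' : Integrable (fun z ↦ h z.2) π := hh.comp_measurable measurable_snd
  calc ∫ y, h y ∂π.snd = ∫ z, h z.2 ∂π := integral_map measurable_snd.aemeasurable hh.1
    _ ≤ ∫ z, (g z.1 + c z) ∂π := integral_mono_ae hh' (hg'.add hc) hle
    _ = ∫ z, g z.1 ∂π + ∫ z, c z ∂π := integral_add hg' hc
    _ = ∫ x, g x ∂π.fst + ∫ z, c z ∂π := by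
      rw [Measure.fst, integral_map measurable_fst.aemeasurable hg.1]

variable {X : Type*} [PseudoMetricSpace X] [MeasurableSpace X]

/-- The transport costs `∫ d dπ` of the couplings `π` of `μ` and `ν` with integrable distance;
their infimum is `W₁(μ, ν)`, except that `sInf ∅ = 0` when there is no such coupling. -/
def couplingCosts (μ ν : Measure X) : Set ℝ :=
  {c | ∃ π : Measure (X × X), IsProbabilityMeasure π ∧ π.map Prod.fst = μ ∧ π.map Prod.snd = ν ∧
    Integrable (fun z : X × X ↦ dist z.1 z.2) π ∧ c = ∫ z : X × X, dist z.1 z.2 ∂π}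

variable {π : Measure (X × X)} {f φ ψ : X → ℝ} {K L : ℝ}

theorem expectedRisk_snd_le_expectedRisk_fst_add
    (hφ₁ : Integrable φ π.fst) (hφ₂ : Integrable φ π.snd)
    (hψ₁ : Integrable ψ π.fst) (hψ₂ : Integrable ψ π.snd)
    (hφ : ∀ a b, |φ a - φ b| ≤ K * dist a b) (hψ : ∀ a b, |ψ a - ψ b| ≤ L * dist a b)
    (hdist : Integrable (fun z : X × X ↦ dist z.1 z.2) π) :
    expectedRisk φ π.snd ψ ≤
      expectedRisk φ π.fst ψ + (K + L) * ∫ z : X × X, dist z.1 z.2 ∂π := by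
  rw [← integral_const_mul]
  refine integral_snd_le_integral_fst_add_integral (hφ₁.sub hψ₁).abs (hφ₂.sub hψ₂).abs
    (hdist.const_mul (K + L)) (ae_of_all _ fun ⟨a, b⟩ ↦ ?_)
  calc |φ b - ψ b| ≤ |φ b - φ a| + |φ a - ψ a| + |ψ a - ψ b| :=
        (abs_sub_le _ (ψ a) _).trans (by gcongr; exact abs_sub_le _ _ _)
    _ ≤ K * dist a b + |φ a - ψ a| + L * dist a b := by
        gcongr
        · exact abs_sub_comm (φ b) (φ a) ▸ hφ a b
        · exact hψ a b
    _ = |φ a - ψ a| + (K + L) * dist a b := by ring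

theorem expectedRisk_snd_le_of_lipschitz
    (hf₁ : Integrable f π.fst) (hf₂ : Integrable f π.snd)
    (hφ₁ : Integrable φ π.fst) (hφ₂ : Integrable φ π.snd)
    (hψ₁ : Integrable ψ π.fst) (hψ₂ : Integrable ψ π.snd)
    (hφ : ∀ a b, |φ a - φ b| ≤ K * dist a b) (hψ : ∀ a b, |ψ a - ψ b| ≤ L * dist a b)
    (hdist : Integrable (fun z : X × X ↦ dist z.1 z.2) π) :
    expectedRisk f π.snd ψ ≤
      expectedRisk f π.fst ψ + (K + L) * ∫ z : X × X, dist z.1 z.2 ∂π +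
        (expectedRisk f π.snd φ + expectedRisk f π.fst φ) := by
  have target : expectedRisk f π.snd ψ ≤ expectedRisk f π.snd φ + expectedRisk φ π.snd ψ :=
    expectedRisk_triangle hf₂ hφ₂ hψ₂
  have transport : expectedRisk φ π.snd ψ ≤
      expectedRisk φ π.fst ψ + (K + L) * ∫ z : X × X, dist z.1 z.2 ∂π :=
    expectedRisk_snd_le_expectedRisk_fst_add hφ₁ hφ₂ hψ₁ hψ₂ hφ hψ hdist
  have source : expectedRisk φ π.fst ψ ≤ expectedRisk f π.fst φ + expectedRisk f π.fst ψ :=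
    expectedRisk_comm f π.fst φ ▸ expectedRisk_triangle hφ₁ hf₁ hψ₁
  linarith

end Transport

/-- The hypothesis class of the `M`-Lipschitz functions `X → [0, 1]`, over which the minimal joint
risk `λ` is taken. -/
def lipschitzPredictors (X : Type*) [PseudoMetricSpace X] (M : ℝ) : Set (X → ℝ) :=
  {φ | (∀ a b, |φ a - φ b| ≤ M * dist a b) ∧ ∀ x, φ x ∈ Set.Icc (0 : ℝ) 1}

theorem integrable_of_mem_lipschitzPredictors {X : Type*} [PseudoMetricSpace X]
    [MeasurableSpace X] [OpensMeasurableSpace X] {μ : Measure X} [IsFiniteMeasure μ]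
    {M : ℝ} {φ : X → ℝ} (hφ : φ ∈ lipschitzPredictors X M) : Integrable φ μ :=
  have continuous_φ : Continuous φ := (LipschitzWith.of_dist_le' hφ.1).continuous
  .of_mem_Icc 0 1 continuous_φ.measurable.aemeasurable (ae_of_all _ hφ.2)

theorem stmt11_general {X : Type*} [PseudoMetricSpace X] [MeasurableSpace X] {μb μt : Measure X}
    {f : X → ℝ} (hfb : Integrable f μb) (hft : Integrable f μt) {M : ℝ} (hM : 0 ≤ M)
    {H : Set (X → ℝ)} (hLip : ∀ φ ∈ H, ∀ a b, |φ a - φ b| ≤ M * dist a b)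
    (hHb : ∀ φ ∈ H, Integrable φ μb) (hHt : ∀ φ ∈ H, Integrable φ μt)
    {φS : X → ℝ} (hφS : φS ∈ H) :
    (∀ φ ∈ H, ∀ π : Measure (X × X), π.map Prod.fst = μb → π.map Prod.snd = μt →
      Integrable (fun z : X × X ↦ dist z.1 z.2) π →
      expectedRisk f μt φS ≤
        expectedRisk f μb φS + 2 * M * (∫ z : X × X, dist z.1 z.2 ∂π) +
          (expectedRisk f μt φ + expectedRisk f μb φ)) ∧
    ((couplingCosts μb μt).Nonempty →
      expectedRisk f μt φS ≤
        expectedRisk f μb φS + 2 * M * sInf (couplingCosts μb μt) +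
          sInf {r | ∃ φ ∈ H, r = expectedRisk f μt φ + expectedRisk f μb φ}) := by
  have coupling_bound : ∀ φ ∈ H, ∀ π : Measure (X × X), π.map Prod.fst = μb →
      π.map Prod.snd = μt → Integrable (fun z : X × X ↦ dist z.1 z.2) π →
      expectedRisk f μt φS ≤
        expectedRisk f μb φS + 2 * M * (∫ z : X × X, dist z.1 z.2 ∂π) +
          (expectedRisk f μt φ + expectedRisk f μb φ) := by
    rintro φ hφ π rfl rfl hdist
    rw [two_mul]
    exact expectedRisk_snd_le_of_lipschitz hfb hft (hHb φ hφ) (hHt φ hφ) (hHb φS hφS) (hHt φS hφS)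
      (hLip φ hφ) (hLip φS hφS) hdist
  refine ⟨coupling_bound, fun hcosts ↦ ?_⟩
  rw [add_assoc, ← sub_le_iff_le_add']
  refine le_mul_csInf_add_csInf hcosts ⟨_, φS, hφS, rfl⟩ (by positivity) ?_
  rintro _ ⟨π, -, hb, ht, hdist, rfl⟩ _ ⟨φ, hφ, rfl⟩
  linarith [coupling_bound φ hφ π hb ht hdist]

/-- Generalization bound (Theorem 2). With binary labeling function `f`,
risk `ε_μ(ψ) = ∫ |f - ψ| dμ`, and `M`-Lipschitz `φ^S : X → [0,1]`: for every
`M`-Lipschitz `φ : X → [0,1]` and every coupling `π` of `μ_b, μ_t` with integrable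
distance, `ε_{μ_t}(φ^S) ≤ ε_{μ_b}(φ^S) + 2M ∫ d dπ + ε_{μ_t}(φ) + ε_{μ_b}(φ)`;
in particular, taking infima over couplings and over `φ` gives
`ε_{μ_t}(φ^S) ≤ ε_{μ_b}(φ^S) + 2M · W₁(μ_b, μ_t) + λ`. -/
theorem stmt11 {X : Type*} [MetricSpace X] [MeasurableSpace X] [BorelSpace X]
    (μb μt : Measure X) [IsProbabilityMeasure μb] [IsProbabilityMeasure μt]
    (f : X → ℝ) (hf : Measurable f) (hf01 : ∀ x, f x = 0 ∨ f x = 1)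
    (M : ℝ) (hM : 0 ≤ M) (φS : X → ℝ)
    (hφSLip : ∀ a b, |φS a - φS b| ≤ M * dist a b)
    (hφS01 : ∀ x, φS x ∈ Set.Icc (0 : ℝ) 1) :
    (∀ φ : X → ℝ, (∀ a b, |φ a - φ b| ≤ M * dist a b) →
      (∀ x, φ x ∈ Set.Icc (0 : ℝ) 1) →
      ∀ π : Measure (X × X), IsProbabilityMeasure π →
        π.map Prod.fst = μb → π.map Prod.snd = μt →
        Integrable (fun z : X × X => dist z.1 z.2) π →
        ∫ x, |f x - φS x| ∂μt ≤
          (∫ x, |f x - φS x| ∂μb) + 2 * M * (∫ z : X × X, dist z.1 z.2 ∂π)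
            + ((∫ x, |f x - φ x| ∂μt) + ∫ x, |f x - φ x| ∂μb)) ∧
    (({c : ℝ | ∃ π : Measure (X × X), IsProbabilityMeasure π ∧
        π.map Prod.fst = μb ∧ π.map Prod.snd = μt ∧
        Integrable (fun z : X × X => dist z.1 z.2) π ∧
        c = ∫ z : X × X, dist z.1 z.2 ∂π}).Nonempty →
      ∫ x, |f x - φS x| ∂μt ≤
        (∫ x, |f x - φS x| ∂μb)
          + 2 * M * sInf {c : ℝ | ∃ π : Measure (X × X), IsProbabilityMeasure π ∧
              π.map Prod.fst = μb ∧ π.map Prod.snd = μt ∧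
              Integrable (fun z : X × X => dist z.1 z.2) π ∧
              c = ∫ z : X × X, dist z.1 z.2 ∂π}
          + sInf {r : ℝ | ∃ φ : X → ℝ, (∀ a b, |φ a - φ b| ≤ M * dist a b) ∧
              (∀ x, φ x ∈ Set.Icc (0 : ℝ) 1) ∧
              r = (∫ x, |f x - φ x| ∂μt) + ∫ x, |f x - φ x| ∂μb}) := by
  have integrable_f (μ : Measure X) [IsProbabilityMeasure μ] : Integrable f μ :=
    integrable_of_forall_eq_zero_or_one hf.aemeasurable hf01
  have bounds := stmt11_general (integrable_f μb) (integrable_f μt) hM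
    (H := lipschitzPredictors X M) (fun _ hφ ↦ hφ.1)
    (fun _ ↦ integrable_of_mem_lipschitzPredictors)
    (fun _ ↦ integrable_of_mem_lipschitzPredictors) ⟨hφSLip, hφS01⟩
  simp only [lipschitzPredictors, Set.mem_ofPred_eq, and_assoc] at bounds
  exact ⟨fun φ hLip h01 π _ ↦ bounds.1 φ ⟨hLip, h01⟩ π, bounds.2⟩
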